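/- Let the base set be ℕ. There is an order-preserving embedding of the power set of ℝ into the interval [⟨O^(1)⟩, ⟨T2⟩] of the clone lattice: an injective map ψ from subsets of ℝ to clones on ℕ such that ⟨O^(1)⟩ ⊆ ψ(A) ⊆ ⟨T2⟩ for all A ⊆ ℝ, and A ⊆ B if and only if ψ(A) ⊆ ψ(B). In particular, there are 2^{2^{ℵ0}} clones on ℕ containing all unary operations. -/

import Mathlib

universe u v

open Cardinal

/-- The set of all finitary operations on `X`: an `n`-th component element is an
operation of arity `n + 1` (so all arities are `≥ 1`). -/
abbrev Ops (X : Type u) : Type u := Σ n : ℕ, ((Fin (n + 1) → X) → X)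

/-- A clone: contains all projections and is closed under composition. -/
def IsClone {X : Type u} (C : Set (Ops X)) : Prop :=
  (∀ (n : ℕ) (k : Fin (n + 1)), (⟨n, fun x => x k⟩ : Ops X) ∈ C) ∧
  ∀ (n m : ℕ) (f : (Fin (n + 1) → X) → X), (⟨n, f⟩ : Ops X) ∈ C →
    ∀ g : Fin (n + 1) → ((Fin (m + 1) → X) → X), (∀ i, (⟨m, g i⟩ : Ops X) ∈ C) →
      (⟨m, fun x => f fun i => g i x⟩ : Ops X) ∈ C

/-- The clone generated by a set of operations. -/
def cloneGen {X : Type u} (F : Set (Ops X)) : Set (Ops X) :=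
  ⋂₀ {C : Set (Ops X) | IsClone C ∧ F ⊆ C}

/-- A precomplete (maximal) clone. -/
def IsPrecompleteClone {X : Type u} (C : Set (Ops X)) : Prop :=
  IsClone C ∧ C ≠ Set.univ ∧ ∀ f : Ops X, f ∉ C → cloneGen (insert f C) = Set.univ

/-- A unary function, viewed as a unary operation in `Ops X`. -/
def unaryOp {X : Type u} (F : X → X) : Ops X := ⟨0, fun x => F (x 0)⟩

/-- The polymorphism clone of a set of binary operations. -/
def Pol2 {X : Type u} (H : Set (X → X → X)) : Set (Ops X) :=
  {f : Ops X | ∀ g : Fin (f.1 + 1) → (X → X → X), (∀ i, g i ∈ H) →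
    (fun x y => f.2 fun i => g i x y) ∈ H}

/-- A binary operation on `ℕ` is essentially unary iff it depends on at most one
variable. -/
def EssUnary2 (u : ℕ → ℕ → ℕ) : Prop :=
  (∃ U : ℕ → ℕ, ∀ x y, u x y = U x) ∨ (∃ U : ℕ → ℕ, ∀ x y, u x y = U y)

/-- The set `∇` of points above the diagonal. -/
def Nabla : Set (ℕ × ℕ) := {p | p.1 < p.2}

/-- The set `T2` of binary never 1-1 operations on `ℕ`. -/
def T2bin : Set (ℕ → ℕ → ℕ) :=
  {f | ∀ u v : ℕ → ℕ → ℕ, EssUnary2 u → EssUnary2 v →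
    ¬ Set.InjOn (fun p : ℕ × ℕ => f (u p.1 p.2) (v p.1 p.2)) Nabla}

/-- `T2` inside `Ops ℕ`. -/
def T2ops : Set (Ops ℕ) :=
  (fun f : ℕ → ℕ → ℕ => (⟨1, fun x => f (x 0) (x 1)⟩ : Ops ℕ)) '' T2bin

/-- The set of all unary operations, inside `Ops ℕ`. -/
def unarySet : Set (Ops ℕ) := Set.range (unaryOp : (ℕ → ℕ) → Ops ℕ)

/-- Labelled out-neighbour function on `V`; degeneracy at scale `k`. -/
def DegNb {V : Type} {n : ℕ} (nb : V × Fin n → V) (k : ℕ) : Prop :=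
  ∀ S : Set V, S.Finite → S.Nonempty → S.ncard ≤ k →
    ∃ v ∈ S, {p : V × Fin n | p.1 ∈ S ∧ nb p ∈ S ∧ (p.1 = v ∨ nb p = v)}.ncard ≤ 2

/-- The lift. -/
def liftNb {V : Type} {n : ℕ} [DecidableEq V] (nb : V × Fin n → V) :
    (V × (V × Fin n → ZMod 2)) × Fin n → V × (V × Fin n → ZMod 2) :=
  fun q => (nb (q.1.1, q.2), q.1.2 + Pi.single (q.1.1, q.2) 1)

lemma edges_le_of_inj {V : Type} {n : ℕ} [Fintype V] [DecidableEq V] (nb : V × Fin n → V)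
    (S : Finset (V × (V × Fin n → ZMod 2))) (hinj : Set.InjOn Prod.fst (S : Set (V × (V × Fin n → ZMod 2)))) :
    ((Finset.univ : Finset ((V × (V × Fin n → ZMod 2)) × Fin n)).filter
      (fun q => q.1 ∈ S ∧ liftNb nb q ∈ S)).card ≤ S.card := by
  classical
  set E := ((Finset.univ : Finset ((V × (V × Fin n → ZMod 2)) × Fin n)).filter
      (fun q => q.1 ∈ S ∧ liftNb nb q ∈ S)) with hE
  let φ : E → V × Fin n := fun q => (q.1.1.1, q.1.2)
  have hφ : Function.Injective φ := by
    rintro ⟨q, hq⟩ ⟨q', hq'⟩ h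
    simp only [φ, Prod.mk.injEq] at h
    simp only [hE, Finset.mem_filter, Finset.mem_univ, true_and] at hq hq'
    apply Subtype.ext
    exact Prod.ext (hinj hq.1 hq'.1 h.1) h.2
  have hli := (Pi.basisFun (ZMod 2) (V × Fin n)).linearIndependent.comp φ hφ
  have := linearIndependent_le_span' _ hli ((S.image Prod.snd : Finset _) : Set (V × Fin n → ZMod 2)) (by
    rintro _ ⟨⟨q, hq⟩, rfl⟩
    simp only [hE, Finset.mem_filter, Finset.mem_univ, true_and] at hq
    have h1 : (liftNb nb q).2 - q.1.2 = (⇑(Pi.basisFun (ZMod 2) (V × Fin n)) ∘ φ) ⟨q, by simp [hE, hq]⟩ := by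
      simp [liftNb, φ]
    change _ ∈ Submodule.span _ _
    rw [← h1]
    apply Submodule.sub_mem
    · apply Submodule.subset_span
      exact Finset.mem_coe.2 (Finset.mem_image_of_mem _ hq.2)
    · apply Submodule.subset_span
      exact Finset.mem_coe.2 (Finset.mem_image_of_mem _ hq.1))
  have h2 : E.card ≤ (S.image Prod.snd).card := by
    simpa using this
  exact h2.trans Finset.card_image_le

lemma deg_lift {V : Type} {n : ℕ} [Fintype V] [DecidableEq V] (nb : V × Fin n → V) (k : ℕ)
    (hl : ∀ p, nb p ≠ p.1) (h : DegNb nb k) : DegNb (liftNb nb) (k + 1) := by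
  classical
  intro S hf hne hk
  by_cases hinj : Set.InjOn Prod.fst S
  · obtain ⟨S, rfl⟩ := hf.exists_finset_coe
    have h1 := edges_le_of_inj nb S hinj
    set E := ((Finset.univ : Finset ((V × (V × Fin n → ZMod 2)) × Fin n)).filter
      (fun q => q.1 ∈ S ∧ liftNb nb q ∈ S)) with hE
    by_contra hcon
    push Not at hcon
    have h3 : ∀ v ∈ S, 3 ≤ (E.filter (fun q => q.1 = v)).card + (E.filter (fun q => liftNb nb q = v)).card := by
      intro v hv
      have := hcon v hv
      refine this.trans_le ?_
      refine le_trans ?_ (Finset.card_union_le _ _)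
      rw [← Set.ncard_coe_finset]
      apply Set.ncard_le_ncard _ (Finset.finite_toSet _)
      rintro p ⟨ha, hb, hc⟩
      simp only [hE, Finset.coe_union, Finset.coe_filter, Finset.mem_filter, Set.mem_union, Set.mem_ofPred_eq, Finset.mem_univ, true_and]
      simp only [Finset.mem_coe] at ha hb
      tauto
    have h4 := Finset.sum_le_sum h3
    rw [Finset.sum_add_distrib, ← Finset.card_eq_sum_card_fiberwise, ← Finset.card_eq_sum_card_fiberwise] at h4
    · simp at h4
      have : 0 < S.card := Finset.card_pos.2 (by simpa using hne)
      omega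
    · intro q hq; simp [hE] at hq; exact hq.2
    · intro q hq; simp [hE] at hq; exact hq.1
  · have hlt : (Prod.fst '' S).ncard ≤ k := by
      have h1 := Set.ncard_image_le (f := Prod.fst) hf
      have h2 : (Prod.fst '' S).ncard ≠ S.ncard := fun h => hinj (Set.injOn_of_ncard_image_eq h hf)
      omega
    obtain ⟨v, ⟨⟨v', x⟩, hvS, rfl⟩, hv⟩ := h (Prod.fst '' S) (hf.image _) (hne.image _) hlt
    refine ⟨(v', x), hvS, le_trans ?_ hv⟩
    apply Set.ncard_le_ncard_of_injOn (fun q => (q.1.1, q.2)) _ _ (Set.toFinite _)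
    · rintro q ⟨ha, hb, hc⟩
      refine ⟨⟨_, ha, rfl⟩, ⟨_, hb, rfl⟩, ?_⟩
      rcases hc with hc | hc
      · left; simp [hc]
      · right; simpa [liftNb] using congrArg Prod.fst hc
    · rintro ⟨⟨a, y⟩, i⟩ ⟨ha, hb, hc⟩ ⟨⟨a', y'⟩, i'⟩ ⟨ha', hb', hc'⟩ heq
      simp only [Prod.mk.injEq] at heq
      obtain ⟨rfl, rfl⟩ := heq
      have hyy : y = y' := by
        have := hl (a, i)
        simp only [liftNb, Prod.mk.injEq] at hc hc'
        rcases hc with ⟨h1, h2⟩ | ⟨h1, h2⟩ <;> rcases hc' with ⟨h3, h4⟩ | ⟨h3, h4⟩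
        · rw [h2, h4]
        · exact absurd (h3.trans h1.symm) this
        · exact absurd (h1.trans h3.symm) this
        · exact add_right_cancel (h2.trans h4.symm)
      rw [hyy]

lemma exists_nb (n k : ℕ) : ∃ (V : Type) (_ : Fintype V) (_ : Nonempty V) (nb : V × Fin n → V),
    (∀ p, nb p ≠ p.1) ∧ (∀ v i j, nb (v, i) = nb (v, j) → i = j) ∧ DegNb nb k := by
  induction k with
  | zero =>
    refine ⟨Fin (n + 1), inferInstance, inferInstance, fun p => p.1.succAbove p.2,
      fun p => Fin.succAbove_ne _ _, fun v i j h => Fin.succAbove_right_injective h, ?_⟩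
    intro S hf hne hk
    have := (Set.ncard_pos hf).2 hne
    omega
  | succ k ih =>
    classical
    obtain ⟨V, _, _, nb, h1, h2, h3⟩ := ih
    refine ⟨V × (V × Fin n → ZMod 2), inferInstance, inferInstance, liftNb nb, ?_, ?_,
      deg_lift nb k h1 h3⟩
    · intro p hp
      exact h1 (p.1.1, p.2) (congrArg Prod.fst hp)
    · intro v i j h
      exact h2 v.1 i j (congrArg Prod.fst h)

/-- Edges of `G` inside `S`. -/
def inE (G : Finset (ℕ × ℕ)) (S : Finset ℕ) : Finset (ℕ × ℕ) :=
  G.filter (fun p => p.1 ∈ S ∧ p.2 ∈ S)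

lemma exists_graph (d k : ℕ) : ∃ (N : ℕ) (G : Finset (ℕ × ℕ)), 0 < N ∧ G.card = d * N ∧
    (∀ p ∈ G, p.1 < N ∧ p.2 < N) ∧
    ∀ S : Finset ℕ, S.Nonempty → S.card ≤ k →
      ∃ v ∈ S, ((inE G S).filter (fun p => p.1 = v ∨ p.2 = v)).card ≤ 2 := by
  classical
  obtain ⟨V, _, _, nb, h1, h2, h3⟩ := exists_nb d k
  let e := Fintype.equivFin V
  let φ : V → ℕ := fun v => (e v : ℕ)
  have hφ : Function.Injective φ := fun a b h => e.injective (Fin.ext h)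
  let g : V × Fin d → ℕ × ℕ := fun p => (φ p.1, φ (nb p))
  have hg : Function.Injective g := by
    rintro ⟨a, i⟩ ⟨b, j⟩ h
    simp only [g, Prod.mk.injEq] at h
    obtain rfl := hφ h.1
    rw [h2 a i j (hφ h.2)]
  refine ⟨Fintype.card V, Finset.univ.image g, Fintype.card_pos, ?_, ?_, ?_⟩
  · rw [Finset.card_image_of_injective _ hg]; simp [mul_comm]
  · intro p hp
    obtain ⟨q, -, rfl⟩ := Finset.mem_image.1 hp
    exact ⟨(e _).2, (e _).2⟩
  · intro S hne hk
    by_cases hS : (φ ⁻¹' (S : Set ℕ)).Nonempty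
    · obtain ⟨v, hv, hc⟩ := h3 (φ ⁻¹' (S : Set ℕ)) (Set.toFinite _) hS (by
        refine le_trans ?_ hk
        rw [← Set.ncard_coe_finset S]
        exact Set.ncard_le_ncard_of_injOn φ (fun a ha => ha) hφ.injOn (Finset.finite_toSet _))
      refine ⟨φ v, hv, le_trans ?_ hc⟩
      rw [← Set.ncard_coe_finset, ← Set.ncard_image_of_injective _ hg]
      apply Set.ncard_le_ncard _ (Set.toFinite _)
      intro p hp
      simp only [inE, Finset.coe_filter, Finset.mem_filter, Set.mem_ofPred_eq] at hp
      obtain ⟨⟨hp1, hp2⟩, hp3⟩ := hp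
      obtain ⟨q, -, rfl⟩ := Finset.mem_image.1 hp1
      exact ⟨q, ⟨hp2.1, hp2.2, hp3.imp (fun h => hφ h) (fun h => hφ h)⟩, rfl⟩
    · obtain ⟨v, hv⟩ := hne
      refine ⟨v, hv, ?_⟩
      rw [Finset.card_eq_zero.2]
      · omega
      · rw [Finset.eq_empty_iff_forall_notMem]
        intro p hp
        simp only [inE, Finset.mem_filter] at hp
        obtain ⟨⟨hp1, hp2⟩, hp3⟩ := hp
        obtain ⟨q, -, rfl⟩ := Finset.mem_image.1 hp1
        exact hS ⟨q.1, hp2.1⟩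

lemma exists_graph' (d k : ℕ) : ∃ (N : ℕ) (G : Finset (ℕ × ℕ)), 0 < N ∧ G.card = d * N ∧
    (∀ p ∈ G, p.1 < N ∧ p.2 < N) ∧
    ∀ S : Finset ℕ, S.card ≤ k → (inE G S).card ≤ 2 * S.card := by
  obtain ⟨N, G, h1, h2, h3, h4⟩ := exists_graph d k
  refine ⟨N, G, h1, h2, h3, ?_⟩
  intro S
  induction S using Finset.strongInduction with
  | H S ih =>
  intro hk
  rcases S.eq_empty_or_nonempty with rfl | hne
  · simp [inE]
  obtain ⟨v, hv, hc⟩ := h4 S hne hk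
  have hcard := Finset.card_erase_add_one hv
  have := ih (S.erase v) (Finset.erase_ssubset hv) (by omega)
  have hsub : inE G S ⊆ inE G (S.erase v) ∪ (inE G S).filter (fun p => p.1 = v ∨ p.2 = v) := by
    intro p hp
    simp only [inE, Finset.mem_union, Finset.mem_filter, Finset.mem_erase] at hp ⊢
    tauto
  have h5 := (Finset.card_le_card hsub).trans (Finset.card_union_le _ _)
  omega

/-- number of vertices -/
noncomputable def gN (d k : ℕ) : ℕ := (exists_graph' d k).choose
/-- the graph -/
noncomputable def gG (d k : ℕ) : Finset (ℕ × ℕ) := (exists_graph' d k).choose_spec.choose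
lemma gspec (d k : ℕ) : 0 < gN d k ∧ (gG d k).card = d * gN d k ∧
    (∀ p ∈ gG d k, p.1 < gN d k ∧ p.2 < gN d k) ∧
    ∀ S : Finset ℕ, S.card ≤ k → (inE (gG d k) S).card ≤ 2 * S.card :=
  (exists_graph' d k).choose_spec.choose_spec

/-- the scale -/
noncomputable def TT : ℕ → ℕ
  | 0 => 0
  | m + 1 => (m + 1) * (gN (m * (1 + TT m) + 1) (TT m) + TT m) +
      (gG (m * (1 + TT m) + 1) (TT m)).card
/-- block size -/
noncomputable def NN (m : ℕ) : ℕ := gN (m * (1 + TT m) + 1) (TT m)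
/-- block graph -/
noncomputable def GG (m : ℕ) : Finset (ℕ × ℕ) := gG (m * (1 + TT m) + 1) (TT m)
/-- yardstick -/
noncomputable def QQ (m : ℕ) : ℕ := NN m + TT m

lemma TT_succ (m : ℕ) : TT (m + 1) = (m + 1) * QQ m + (GG m).card := rfl
lemma NN_pos (m : ℕ) : 0 < NN m := (gspec _ _).1
lemma QQ_pos (m : ℕ) : 0 < QQ m := Nat.add_pos_left (NN_pos m) _
lemma GG_card (m : ℕ) : m * QQ m < (GG m).card := by
  have h := (gspec (m * (1 + TT m) + 1) (TT m)).2.1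
  change (GG m).card = _ * NN m at h
  rw [h, QQ]
  have := NN_pos m
  have h2 : m * TT m ≤ m * TT m * NN m := Nat.le_mul_of_pos_right _ this
  nlinarith
lemma GG_lt (m : ℕ) : ∀ p ∈ GG m, p.1 < NN m ∧ p.2 < NN m := (gspec _ _).2.2.1
lemma GG_sparse (m : ℕ) : ∀ S : Finset ℕ, S.card ≤ TT m → (inE (GG m) S).card ≤ 2 * S.card :=
  (gspec _ _).2.2.2
lemma TT_mono : Monotone TT := by
  apply monotone_nat_of_le_succ
  intro m
  rw [TT_succ, QQ]
  nlinarith [Nat.zero_le (m * NN m), Nat.zero_le (m * TT m)]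
lemma TT_ge {n m : ℕ} (h : n < m) : n * QQ n ≤ TT m := by
  refine le_trans ?_ (TT_mono (Nat.succ_le_of_lt h))
  rw [Nat.succ_eq_add_one, TT_succ]
  nlinarith
lemma TT_sum (n : ℕ) : ∑ m ∈ Finset.range n, (GG m).card ≤ TT n := by
  induction n with
  | zero => simp
  | succ n ih =>
    rw [Finset.sum_range_succ, TT_succ, QQ]
    nlinarith [Nat.zero_le (n * NN n), Nat.zero_le (n * TT n)]

/-- edge relation over a block set -/
def EE (A : Set ℕ) (x y : ℕ) : Prop :=
  x.unpair.1 = y.unpair.1 ∧ x.unpair.1 ∈ A ∧ (x.unpair.2, y.unpair.2) ∈ GG x.unpair.1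

open Classical in
/-- the binary operation -/
noncomputable def ff (A : Set ℕ) (x y : ℕ) : ℕ := if EE A x y then Nat.pair x y + 1 else 0

/-- as an operation -/
noncomputable def fop (A : Set ℕ) : Ops ℕ := ⟨1, fun x => ff A (x 0) (x 1)⟩

open Classical in
/-- edges in block m within B -/
noncomputable def FB (B : Finset ℕ) (m : ℕ) : Finset (ℕ × ℕ) :=
  (inE (GG m) ((B.filter (fun x => x.unpair.1 = m)).image (fun x => x.unpair.2))).image
    (fun p => (Nat.pair m p.1, Nat.pair m p.2))

lemma FB_card (B : Finset ℕ) (m : ℕ) : (FB B m).card ≤ (GG m).card :=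
  Finset.card_image_le.trans (Finset.card_filter_le _ _)

lemma FB_card' (B : Finset ℕ) (m : ℕ) (h : B.card ≤ TT m) :
    (FB B m).card ≤ 2 * (B.filter (fun x => x.unpair.1 = m)).card := by
  have h1 : ((B.filter (fun x => x.unpair.1 = m)).image (fun x => x.unpair.2)).card ≤
    (B.filter (fun x => x.unpair.1 = m)).card := Finset.card_image_le
  refine Finset.card_image_le.trans ((GG_sparse m _ ?_).trans (by omega))
  exact h1.trans ((Finset.card_filter_le _ _).trans h)

lemma mem_FB {B : Finset ℕ} {A : Set ℕ} {x y : ℕ} (hx : x ∈ B) (hy : y ∈ B) (h : EE A x y) :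
    (x, y) ∈ FB B x.unpair.1 := by
  obtain ⟨h1, h2, h3⟩ := h
  refine Finset.mem_image.2 ⟨(x.unpair.2, y.unpair.2), ?_, ?_⟩
  · refine Finset.mem_filter.2 ⟨h3, Finset.mem_image.2 ⟨x, ?_, rfl⟩, Finset.mem_image.2 ⟨y, ?_, rfl⟩⟩
    · simp [hx]
    · simp [hy, h1]
  · have e1 := Nat.pair_unpair x
    have e2 := Nat.pair_unpair y
    rw [← h1] at e2
    simp [e1, e2]

/-- goodness relative to a block set -/
def Good (A : Set ℕ) : Set (Ops ℕ) :=
  {f | ∀ C, ∃ C', ∀ n ∈ A, C' ≤ n → ∀ B : Finset ℕ, B.card ≤ C * QQ n →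
    ((Fintype.piFinset (fun _ : Fin (f.1 + 1) => B)).image f.2).card ≤ C' * QQ n}

lemma good_clone (A : Set ℕ) : IsClone (Good A) := by
  classical
  constructor
  · intro n k C
    refine ⟨C, fun m _ _ B hB => le_trans (Finset.card_le_card ?_) hB⟩
    intro y hy
    obtain ⟨x, hx, rfl⟩ := Finset.mem_image.1 hy
    exact Fintype.mem_piFinset.1 hx k
  · intro n m f hf g hg C
    choose D hD using fun i => hg i C
    obtain ⟨C', hC'⟩ := hf (∑ i, D i)
    refine ⟨C' + ∑ i, D i, fun k hk hle B hB => ?_⟩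
    let B' : Finset ℕ := Finset.univ.biUnion
      (fun i => (Fintype.piFinset (fun _ : Fin (m + 1) => B)).image (g i))
    have hB' : B'.card ≤ (∑ i, D i) * QQ k := by
      refine Finset.card_biUnion_le.trans ?_
      rw [Finset.sum_mul]
      refine Finset.sum_le_sum fun i _ => hD i k hk ?_ B hB
      have := Finset.single_le_sum (f := D) (fun i _ => Nat.zero_le _) (Finset.mem_univ i)
      omega
    refine le_trans (Finset.card_le_card ?_) ((hC' k hk (by omega) B' hB').trans
      (Nat.mul_le_mul_right _ (by omega)))
    intro y hy
    obtain ⟨x, hx, rfl⟩ := Finset.mem_image.1 hy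
    refine Finset.mem_image.2 ⟨fun i => g i x, Fintype.mem_piFinset.2 fun i => ?_, rfl⟩
    exact Finset.mem_biUnion.2 ⟨i, Finset.mem_univ _, Finset.mem_image.2 ⟨x, hx, rfl⟩⟩

lemma good_unary (A : Set ℕ) (F : ℕ → ℕ) : unaryOp F ∈ Good A := by
  classical
  intro C
  refine ⟨C, fun m _ _ B hB => le_trans ?_ hB⟩
  refine le_trans (Finset.card_le_card (t := B.image F) ?_) Finset.card_image_le
  intro y hy
  obtain ⟨x, hx, rfl⟩ := Finset.mem_image.1 hy
  exact Finset.mem_image.2 ⟨x 0, Fintype.mem_piFinset.1 hx 0, rfl⟩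

lemma good_fop (A A' : Set ℕ) (h : (A ∩ A').Finite) : fop A' ∈ Good A := by
  classical
  intro C
  obtain ⟨b, hb⟩ := h.bddAbove
  refine ⟨b + 1 + C + (2 * C + 2), fun n hn hle B hB => ?_⟩
  have hn' : n ∉ A' := fun hh => by
    have := hb ⟨hn, hh⟩
    omega
  let I := (B.image (fun x => x.unpair.1)).filter (fun m => n < m)
  let U := (Finset.range n).biUnion (FB B) ∪ I.biUnion (FB B)
  have h1 : ((Finset.range n).biUnion (FB B)).card ≤ TT n :=
    Finset.card_biUnion_le.trans ((Finset.sum_le_sum fun m _ => FB_card B m).trans (TT_sum n))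
  have h2 : (I.biUnion (FB B)).card ≤ 2 * B.card := by
    refine Finset.card_biUnion_le.trans ?_
    have : ∀ m ∈ I, (FB B m).card ≤ 2 * (B.filter (fun x => x.unpair.1 = m)).card := by
      intro m hm
      apply FB_card'
      have hm : n < m := (Finset.mem_filter.1 hm).2
      refine hB.trans (le_trans ?_ (TT_ge hm))
      exact Nat.mul_le_mul_right _ (by omega)
    refine (Finset.sum_le_sum this).trans ?_
    rw [← Finset.mul_sum]
    refine Nat.mul_le_mul_left _ ?_
    rw [Finset.card_eq_sum_card_fiberwise (f := fun x => x.unpair.1) (s := B)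
      (t := B.image (fun x => x.unpair.1)) (fun x hx => by
        exact Finset.mem_coe.2 (Finset.mem_image_of_mem _ hx))]
    exact Finset.sum_le_sum_of_subset (Finset.filter_subset _ _)
  have hsub : (Fintype.piFinset (fun _ : Fin ((fop A').1 + 1) => B)).image (fop A').2 ⊆
      insert 0 (U.image (fun p => Nat.pair p.1 p.2 + 1)) := by
    intro y hy
    obtain ⟨x, hx, rfl⟩ := Finset.mem_image.1 hy
    have hx := Fintype.mem_piFinset.1 hx
    have hx0 := hx (0 : Fin 2)
    have hx1 := hx (1 : Fin 2)
    change ff A' (x (0 : Fin 2)) (x (1 : Fin 2)) ∈ _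
    unfold ff
    split_ifs with hE
    · refine Finset.mem_insert_of_mem (Finset.mem_image.2
        ⟨(x (0 : Fin 2), x (1 : Fin 2)), ?_, rfl⟩)
      have hm := mem_FB hx0 hx1 hE
      rcases lt_trichotomy (x (0 : Fin 2)).unpair.1 n with hlt | heq | hgt
      · exact Finset.mem_union_left _ (Finset.mem_biUnion.2 ⟨_, Finset.mem_range.2 hlt, hm⟩)
      · exact absurd (heq ▸ hE.2.1) hn'
      · exact Finset.mem_union_right _ (Finset.mem_biUnion.2 ⟨_, Finset.mem_filter.2
          ⟨Finset.mem_image.2 ⟨_, hx0, rfl⟩, hgt⟩, hm⟩)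
    · exact Finset.mem_insert_self _ _
  have h3 := Finset.card_le_card hsub
  have h4 := Finset.card_insert_le 0 (U.image (fun p => Nat.pair p.1 p.2 + 1))
  have h5 : (U.image (fun p => Nat.pair p.1 p.2 + 1)).card ≤ U.card := Finset.card_image_le
  have h6 : U.card ≤ _ := Finset.card_union_le _ _
  have h7 : TT n ≤ QQ n := Nat.le_add_left _ _
  have h8 := QQ_pos n
  nlinarith [Nat.zero_le ((b + 1 + C) * QQ n)]

lemma not_good_fop (A : Set ℕ) (h : A.Infinite) : fop A ∉ Good A := by
  classical
  intro hg
  obtain ⟨C', hC'⟩ := hg 1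
  obtain ⟨n, hn, hlt⟩ := h.exists_gt C'
  let B := (Finset.range (NN n)).image (Nat.pair n)
  have hB : B.card ≤ 1 * QQ n := by
    refine Finset.card_image_le.trans ?_
    simp [QQ]
  have h1 := hC' n hn hlt.le B hB
  have h2 : (GG n).card ≤ ((Fintype.piFinset (fun _ : Fin ((fop A).1 + 1) => B)).image (fop A).2).card := by
    apply Finset.card_le_card_of_injOn (fun p => Nat.pair (Nat.pair n p.1) (Nat.pair n p.2) + 1)
    · intro p hp
      have hp' := GG_lt n p hp
      refine Finset.mem_coe.2 (Finset.mem_image.2 ⟨(![Nat.pair n p.1, Nat.pair n p.2] : Fin 2 → ℕ), ?_, ?_⟩)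
      · apply Fintype.mem_piFinset.2
        intro (i : Fin 2)
        fin_cases i
        · exact Finset.mem_image.2 ⟨p.1, Finset.mem_range.2 hp'.1, rfl⟩
        · exact Finset.mem_image.2 ⟨p.2, Finset.mem_range.2 hp'.2, rfl⟩
      · have hE : EE A (Nat.pair n p.1) (Nat.pair n p.2) := by
          simpa [EE, hn] using hp
        change ff A (Nat.pair n p.1) (Nat.pair n p.2) = _
        simp [ff, hE]
    · intro p _ q _ hpq
      simp only [Nat.add_right_cancel_iff, Nat.pair_eq_pair] at hpq
      exact Prod.ext hpq.1.2 hpq.2.2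
  have h3 := GG_card n
  have h4 : C' * QQ n ≤ n * QQ n := Nat.mul_le_mul_right _ hlt.le
  omega

lemma ff_fin_right (A : Set ℕ) (a : ℕ) : (Set.range (ff A a)).Finite := by
  classical
  apply Set.Finite.subset (Finset.finite_toSet (insert 0 ((GG a.unpair.1).image
    (fun p => Nat.pair a (Nat.pair a.unpair.1 p.2) + 1))))
  rintro _ ⟨y, rfl⟩
  unfold ff
  split_ifs with h
  · obtain ⟨h1, h2, h3⟩ := h
    refine Finset.mem_coe.2 (Finset.mem_insert_of_mem (Finset.mem_image.2 ⟨_, h3, ?_⟩))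
    simp [h1]
  · simp

lemma ff_fin_left (A : Set ℕ) (b : ℕ) : (Set.range (fun a => ff A a b)).Finite := by
  classical
  apply Set.Finite.subset (Finset.finite_toSet (insert 0 ((GG b.unpair.1).image
    (fun p => Nat.pair (Nat.pair b.unpair.1 p.1) b + 1))))
  rintro _ ⟨x, rfl⟩
  simp only [ff]
  split_ifs with h
  · obtain ⟨h1, h2, h3⟩ := h
    rw [h1] at h3
    refine Finset.mem_coe.2 (Finset.mem_insert_of_mem (Finset.mem_image.2 ⟨_, h3, ?_⟩))
    simp [← h1]
  · simp

lemma not_inj_aux (g : ℕ → ℕ → ℕ) (R : Set ℕ) (hR : R.Finite) (h : ∀ y, g 0 y ∈ R) :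
    ¬ Set.InjOn (fun p : ℕ × ℕ => g p.1 p.2) Nabla := by
  intro hi
  have : Function.Injective (fun y => g 0 (y + 1)) := by
    intro y y' hy
    have := @hi (0, y + 1) (by simp [Nabla]) (0, y' + 1) (by simp [Nabla]) hy
    simpa using this
  exact Set.infinite_range_of_injective this (hR.subset (by rintro _ ⟨y, rfl⟩; exact h _))

lemma ff_T2 (A : Set ℕ) : ff A ∈ T2bin := by
  intro u v hu hv
  rcases hu with ⟨U, hU⟩ | ⟨U, hU⟩ <;> rcases hv with ⟨V, hV⟩ | ⟨V, hV⟩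
  · exact not_inj_aux (fun x y => ff A (u x y) (v x y)) {ff A (U 0) (V 0)} (Set.finite_singleton _)
      (by simp [hU, hV])
  · exact not_inj_aux (fun x y => ff A (u x y) (v x y)) _ (ff_fin_right A (U 0))
      (by intro y; simp [hU, hV])
  · exact not_inj_aux (fun x y => ff A (u x y) (v x y)) _ (ff_fin_left A (V 0))
      (by intro y; simp [hU, hV])
  · intro hi
    have := @hi (0, 2) (by simp [Nabla]) (1, 2) (by simp [Nabla]) (by simp [hU, hV])
    simp at this

lemma unary_T2 (F : ℕ → ℕ) : (fun x _ => F x) ∈ T2bin := by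
  intro u v hu hv
  rcases hu with ⟨U, hU⟩ | ⟨U, hU⟩
  · exact not_inj_aux (fun x y => F (u x y)) {F (U 0)} (Set.finite_singleton _) (by simp [hU])
  · intro hi
    have := @hi (0, 2) (by simp [Nabla]) (1, 2) (by simp [Nabla]) (by simp [hU])
    simp at this

lemma cloneGen_isClone (F : Set (Ops ℕ)) : IsClone (cloneGen F) := by
  constructor
  · intro n k C hC
    exact hC.1.1 n k
  · intro n m f hf g hg C hC
    exact hC.1.2 n m f (hf C hC) g (fun i => hg i C hC)

lemma subset_cloneGen (F : Set (Ops ℕ)) : F ⊆ cloneGen F := fun _ hx _ hC => hC.2 hx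

lemma cloneGen_le {F C : Set (Ops ℕ)} (hC : IsClone C) (h : F ⊆ C) : cloneGen F ⊆ C :=
  fun _ hx => hx C ⟨hC, h⟩

/-- almost disjoint family -/
noncomputable def AD (r : ℝ) : Set ℕ :=
  Set.range (fun k : ℕ => Nat.pair k (Encodable.encode ⌊(k : ℝ) * r⌋))

lemma AD_inf (r : ℝ) : (AD r).Infinite :=
  Set.infinite_range_of_injective fun _ _ h => (Nat.pair_eq_pair.1 h).1

lemma AD_fin_lt {r s : ℝ} (h : r < s) : (AD r ∩ AD s).Finite := by
  obtain ⟨K, hK⟩ := exists_nat_gt (1 / (s - r))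
  have hpos : 0 < s - r := sub_pos.2 h
  rw [div_lt_iff₀ hpos] at hK
  apply Set.Finite.subset ((Set.finite_lt_nat K).image
    (fun k : ℕ => Nat.pair k (Encodable.encode ⌊(k : ℝ) * r⌋)))
  rintro _ ⟨⟨k, rfl⟩, ⟨l, hl⟩⟩
  obtain ⟨rfl, h2⟩ := Nat.pair_eq_pair.1 hl
  refine ⟨l, ?_, rfl⟩
  by_contra hlt
  have hlt : K ≤ l := not_lt.1 hlt
  have hc : (K : ℝ) ≤ l := by exact_mod_cast hlt
  have h3 := Encodable.encode_injective h2
  have h4 := Int.lt_floor_add_one ((l : ℝ) * s)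
  have h5 := Int.floor_le ((l : ℝ) * r)
  rw [h3] at h4
  nlinarith

lemma AD_fin {r s : ℝ} (h : r ≠ s) : (AD r ∩ AD s).Finite := by
  rcases lt_or_gt_of_ne h with h | h
  · exact AD_fin_lt h
  · rw [Set.inter_comm]; exact AD_fin_lt h

/-- the embedding -/
noncomputable def psi (A : Set ℝ) : Set (Ops ℕ) :=
  cloneGen (unarySet ∪ (fun r => fop (AD r)) '' A)

lemma psi_iff (A B : Set ℝ) : A ⊆ B ↔ psi A ⊆ psi B := by
  constructor
  · intro h
    refine cloneGen_le (cloneGen_isClone _) (Set.Subset.trans ?_ (subset_cloneGen _))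
    exact Set.union_subset_union_right _ (Set.image_mono h)
  · intro h r hr
    by_contra hrB
    apply not_good_fop (AD r) (AD_inf r)
    have h1 : fop (AD r) ∈ psi B := h (subset_cloneGen _ (Or.inr ⟨r, hr, rfl⟩))
    refine cloneGen_le (good_clone _) ?_ h1
    rintro _ (⟨F, rfl⟩ | ⟨s, hs, rfl⟩)
    · exact good_unary _ F
    · exact good_fop _ _ (AD_fin (fun e => hrB (e ▸ hs)))

lemma unary_sub : unarySet ⊆ cloneGen T2ops := by
  rintro _ ⟨F, rfl⟩
  have h := cloneGen_isClone T2ops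
  exact h.2 1 0 (fun x => F (x 0)) (subset_cloneGen _ ⟨_, unary_T2 F, rfl⟩)
    (fun _ x => x 0) (fun _ => h.1 0 0)

lemma psi_inj : Function.Injective psi := fun A B h =>
  Set.Subset.antisymm ((psi_iff A B).2 h.le) ((psi_iff B A).2 h.ge)

/-- **Goldstern–Sági–Shelah**: the power set of `ℝ` order-embeds into the interval
`[⟨O⁽¹⁾⟩, ⟨T2⟩]` of the clone lattice on `ℕ`; in particular there are `2^(2^ℵ₀)` clones
on `ℕ` containing all unary operations. -/
theorem stmt16 :
    (∃ ψ : Set ℝ → Set (Ops ℕ),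
      Function.Injective ψ ∧
      (∀ A : Set ℝ, IsClone (ψ A)) ∧
      (∀ A : Set ℝ, cloneGen unarySet ⊆ ψ A ∧ ψ A ⊆ cloneGen T2ops) ∧
      (∀ A B : Set ℝ, A ⊆ B ↔ ψ A ⊆ ψ B)) ∧
    #{C : Set (Ops ℕ) // IsClone C ∧ ∀ F : ℕ → ℕ, unaryOp F ∈ C} =
      (2 : Cardinal) ^ ((2 : Cardinal) ^ (ℵ₀ : Cardinal)) := by
  refine ⟨⟨psi, psi_inj, fun A => cloneGen_isClone _, fun A => ⟨?_, ?_⟩, psi_iff⟩, ?_⟩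
  · exact cloneGen_le (cloneGen_isClone _) (Set.subset_union_left.trans (subset_cloneGen _))
  · refine cloneGen_le (cloneGen_isClone _) (Set.union_subset unary_sub ?_)
    rintro _ ⟨r, hr, rfl⟩
    exact subset_cloneGen _ ⟨_, ff_T2 _, rfl⟩
  · apply le_antisymm
    · refine (Cardinal.mk_subtype_le _).trans ?_
      rw [Cardinal.mk_set]
      refine Cardinal.power_le_power_left two_ne_zero ?_
      rw [Cardinal.mk_sigma]
      refine (Cardinal.sum_le_sum _ (fun _ => (2 : Cardinal) ^ (ℵ₀ : Cardinal)) ?_).trans ?_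
      · intro n
        simp
      · simp
    · have h : #(Set ℝ) = (2 : Cardinal) ^ ((2 : Cardinal) ^ (ℵ₀ : Cardinal)) := by
        rw [Cardinal.mk_set, Cardinal.mk_real, Cardinal.two_power_aleph0]
      rw [← h]
      refine Cardinal.mk_le_of_injective
        (f := fun A => ⟨psi A, cloneGen_isClone _, fun F => subset_cloneGen _ (Or.inl ⟨F, rfl⟩)⟩) ?_
      intro A B hAB
      exact psi_inj (congrArg Subtype.val hAB)
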